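/- arXiv:1307.0193 — 5 statements merged into one kernel-verified Lean document; each statement's English description precedes it below -/
import Mathlib

section
/- Let 𝒮 be a GUS sample of R = Π_{i ∈ ι} R_i with parameters a > 0 and b : Finset ι → ℝ, and let f : R → ℝ. For S ⊆ ι define y_S = Σ_{u ∈ Π_{i ∈ S} R_i} ( Σ_{v ∈ Π_{i ∈ ι∖S} R_i} f(u ⊎ v) )², where u ⊎ v denotes the tuple in R whose i-th coordinate is u_i for i ∈ S and v_i for i ∉ S, and define c_S = Σ_{T ⊆ S} (−1)^{|S|−|T|} b(T). Then the estimator X = (1/a) · Σ_{t ∈ 𝒮} f(t) satisfies Var(X) = Σ_{S ⊆ ι} (c_S / a²) · y_S − y_∅. -/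
open MeasureTheory ProbabilityTheory Finset

/-- Combine a tuple `u` indexed by `S` with a tuple `v` indexed by `Sᶜ` into a full tuple. -/
def mergeTuple {ι : Type*} [Fintype ι] [DecidableEq ι] {R : ι → Type*}
    (S : Finset ι) (u : ∀ i : {x // x ∈ S}, R i.1) (v : ∀ i : {x // x ∈ Sᶜ}, R i.1) :
    ∀ i, R i :=
  fun i => if h : i ∈ S then u ⟨i, h⟩ else v ⟨i, Finset.mem_compl.mpr h⟩

/-!
The selection events `{t ∈ 𝒮}` have pairwise covariances `b (T(t, t')) - a²`, so `a² Var X` is the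
sum of `b (T(t, t')) f t f t'` over all pairs, minus `a² (∑ t, f t)² = a² y_∅`. Expanding the
squares, `y_S` is the sum of `f t * f t'` over the pairs with `S ⊆ T(t, t')`, and Möbius inversion
on the subset lattice writes `b (T(t, t'))` as the sum of the `c_S` with `S ⊆ T(t, t')`; exchanging
the sums over `S` and over pairs gives the formula.
-/

section MoebiusInversion

variable {α A : Type*} [Ring A]

/-- The Möbius transform of a set function along the subset lattice; applied to the pair inclusion
probabilities `b` of a GUS sample it gives the coefficients `c_S`. The subtraction in the exponent
is not truncated, since `T ⊆ S`. -/
def subsetMoebius (b : Finset α → A) (S : Finset α) : A :=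
  ∑ T ∈ S.powerset, (-1 : A) ^ (#S - #T) * b T

lemma sum_Icc_neg_one_pow_card_sub [DecidableEq α] {T U : Finset α} (hTU : T ⊆ U) :
    ∑ S ∈ Icc T U, (-1 : A) ^ (#S - #T) = if T = U then 1 else 0 := by
  have sum_eq_sum_sdiff :
      ∑ S ∈ Icc T U, (-1 : A) ^ (#S - #T) = ∑ W ∈ (U \ T).powerset, (-1 : A) ^ #W := by
    refine sum_nbij' (· \ T) (T ∪ ·) ?_ ?_ ?_ ?_ ?_
    · intro S hS
      exact mem_powerset.mpr (sdiff_subset_sdiff (mem_Icc.mp hS).2 subset_rfl)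
    · intro W hW
      exact mem_Icc.mpr ⟨subset_union_left,
        union_subset hTU ((mem_powerset.mp hW).trans sdiff_subset)⟩
    · intro S hS
      exact union_sdiff_of_subset (mem_Icc.mp hS).1
    · intro W hW
      exact union_sdiff_cancel_left (subset_sdiff.mp (mem_powerset.mp hW)).2.symm
    · intro S hS
      rw [card_sdiff_of_subset (mem_Icc.mp hS).1]
  have sdiff_eq_empty : U \ T = ∅ ↔ T = U :=
    sdiff_eq_empty_iff_subset.trans ⟨hTU.antisymm, fun h => h.ge⟩
  have alternating_sum := congrArg (Int.cast (R := A)) (sum_powerset_neg_one_pow_card (x := U \ T))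
  push_cast [sdiff_eq_empty] at alternating_sum
  rw [sum_eq_sum_sdiff, alternating_sum]

lemma sum_powerset_subsetMoebius (b : Finset α → A) (U : Finset α) :
    ∑ S ∈ U.powerset, subsetMoebius b S = b U := by
  classical
  calc ∑ S ∈ U.powerset, subsetMoebius b S
      = ∑ T ∈ U.powerset, ∑ S ∈ Icc T U, (-1 : A) ^ (#S - #T) * b T := by
        refine sum_comm' fun S T => ?_
        simp only [mem_powerset, mem_Icc]
        exact ⟨fun ⟨hSU, hTS⟩ => ⟨⟨hTS, hSU⟩, hTS.trans hSU⟩, fun ⟨⟨hTS, hSU⟩, _⟩ => ⟨hSU, hTS⟩⟩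
    _ = ∑ T ∈ U.powerset, if T = U then b T else 0 := by
        refine sum_congr rfl fun T hT => ?_
        rw [← sum_mul, sum_Icc_neg_one_pow_card_sub (mem_powerset.mp hT), ite_mul, one_mul,
          zero_mul]
    _ = b U := by simp

end MoebiusInversion

lemma sum_sq_sum_fiber {α κ A : Type*} [Fintype α] [Fintype κ] [DecidableEq κ] [Semiring A]
    (g : α → κ) (f : α → A) :
    ∑ u, (∑ t with g t = u, f t) ^ 2 = ∑ t, ∑ t' with g t = g t', f t * f t' := by
  calc ∑ u, (∑ t with g t = u, f t) ^ 2
      = ∑ u, ∑ t with g t = u, ∑ t' with g t = g t', f t * f t' := by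
        refine sum_congr rfl fun u _ => ?_
        rw [sq, sum_mul_sum]
        refine sum_congr rfl fun t ht => ?_
        simp only [(mem_filter.mp ht).2, eq_comm (a := u)]
    _ = ∑ t, ∑ t' with g t = g t', f t * f t' := sum_fiberwise _ _ _

section AgreementSet

variable {ι : Type*} [Fintype ι] {R : ι → Type*} [∀ i, DecidableEq (R i)]

/-- The set `T(t, t')` of coordinates on which two tuples agree. -/
def agreementSet (t t' : ∀ i, R i) : Finset ι := {i | t i = t' i}

lemma subset_agreementSet_iff {S : Finset ι} {t t' : ∀ i, R i} :
    S ⊆ agreementSet t t' ↔ S.restrict t = S.restrict t' := by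
  simp [agreementSet, subset_iff, funext_iff]

end AgreementSet

section MergeTuple

variable {ι : Type*} [Fintype ι] [DecidableEq ι] {R : ι → Type*}

lemma restrict_mergeTuple (S : Finset ι) (u : ∀ i : {x // x ∈ S}, R i.1)
    (v : ∀ i : {x // x ∈ Sᶜ}, R i.1) : S.restrict (mergeTuple S u v) = u := by
  ext i
  simp [mergeTuple]

lemma restrict_compl_mergeTuple (S : Finset ι) (u : ∀ i : {x // x ∈ S}, R i.1)
    (v : ∀ i : {x // x ∈ Sᶜ}, R i.1) : Sᶜ.restrict (mergeTuple S u v) = v := by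
  ext i
  simp [mergeTuple, mem_compl.mp i.2]

lemma mergeTuple_restrict (S : Finset ι) (t : ∀ i, R i) :
    mergeTuple S (S.restrict t) (Sᶜ.restrict t) = t := by
  ext i
  simp [mergeTuple]

variable [∀ i, Fintype (R i)] [∀ i, DecidableEq (R i)]

lemma sum_mergeTuple {M : Type*} [AddCommMonoid M] (f : (∀ i, R i) → M) (S : Finset ι)
    (u : ∀ i : {x // x ∈ S}, R i.1) :
    ∑ v, f (mergeTuple S u v) = ∑ t with S.restrict t = u, f t := by
  refine sum_nbij' (mergeTuple S u) Sᶜ.restrict ?_ (fun _ _ => mem_univ _) ?_ ?_ fun _ _ => rfl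
  · intro v _
    exact mem_filter.mpr ⟨mem_univ _, restrict_mergeTuple S u v⟩
  · intro v _
    exact restrict_compl_mergeTuple S u v
  · intro t ht
    rw [← (mem_filter.mp ht).2, mergeTuple_restrict]

end MergeTuple

section GroupedSquareSum

variable {ι : Type*} [Fintype ι] [DecidableEq ι] {R : ι → Type*} [∀ i, Fintype (R i)]

/-- The quantity `y_S`: group the values of `f` by the coordinates in `S`, sum each group, and add
up the squares of the group totals. -/
def groupedSquareSum {A : Type*} [Semiring A] (f : (∀ i, R i) → A) (S : Finset ι) : A :=
  ∑ u : ∀ i : {x // x ∈ S}, R i.1, (∑ v : ∀ i : {x // x ∈ Sᶜ}, R i.1, f (mergeTuple S u v)) ^ 2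

lemma groupedSquareSum_eq_sum_subset_agreementSet [∀ i, DecidableEq (R i)]
    {A : Type*} [Semiring A] (f : (∀ i, R i) → A) (S : Finset ι) :
    groupedSquareSum f S = ∑ t, ∑ t' with S ⊆ agreementSet t t', f t * f t' := by
  simp only [groupedSquareSum, sum_mergeTuple, sum_sq_sum_fiber, subset_agreementSet_iff]

lemma groupedSquareSum_empty {A : Type*} [Semiring A] (f : (∀ i, R i) → A) :
    groupedSquareSum f ∅ = ∑ t, ∑ t', f t * f t' := by
  classical
  simp [groupedSquareSum_eq_sum_subset_agreementSet]

lemma sum_subsetMoebius_mul_groupedSquareSum [∀ i, DecidableEq (R i)] {A : Type*} [Ring A]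
    (b : Finset ι → A) (f : (∀ i, R i) → A) :
    ∑ S, subsetMoebius b S * groupedSquareSum f S =
      ∑ t, ∑ t', b (agreementSet t t') * (f t * f t') := by
  calc ∑ S, subsetMoebius b S * groupedSquareSum f S
      = ∑ S, ∑ t, ∑ t' with S ⊆ agreementSet t t', subsetMoebius b S * (f t * f t') := by
        simp only [groupedSquareSum_eq_sum_subset_agreementSet, mul_sum]
    _ = ∑ t, ∑ t', ∑ S ∈ (agreementSet t t').powerset, subsetMoebius b S * (f t * f t') := by
        rw [sum_comm]
        refine sum_congr rfl fun t _ => sum_comm' fun S t' => ?_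
        simp
    _ = ∑ t, ∑ t', b (agreementSet t t') * (f t * f t') := by
        simp only [← sum_mul, sum_powerset_subsetMoebius]

end GroupedSquareSum

section RandomSubset

variable {Ω : Type*} [MeasurableSpace Ω] {μ : Measure Ω} [IsProbabilityMeasure μ]

lemma covariance_indicator_const {E F : Set Ω} (hE : MeasurableSet E) (hF : MeasurableSet F)
    (c d : ℝ) :
    cov[E.indicator fun _ => c, F.indicator fun _ => d; μ] =
      (μ.real (E ∩ F) - μ.real E * μ.real F) * (c * d) := by
  have indicator_mul : (E.indicator fun _ => c) * (F.indicator fun _ => d) =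
      (E ∩ F).indicator fun _ => c * d := by
    ext ω
    exact (Set.inter_indicator_mul (fun _ => c) (fun _ => d) ω).symm
  rw [covariance_eq_sub ((memLp_const c).indicator hE) ((memLp_const d).indicator hF),
    indicator_mul, integral_indicator_const _ (hE.inter hF), integral_indicator_const _ hE,
    integral_indicator_const _ hF]
  simp only [smul_eq_mul]
  ring

lemma variance_sum_mem {α : Type*} [Fintype α] {𝒮 : Ω → Finset α}
    (h𝒮 : ∀ t, MeasurableSet {ω | t ∈ 𝒮 ω}) (f : α → ℝ) :
    Var[fun ω => ∑ t ∈ 𝒮 ω, f t; μ] =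
      ∑ t, ∑ t', (μ.real {ω | t ∈ 𝒮 ω ∧ t' ∈ 𝒮 ω} -
        μ.real {ω | t ∈ 𝒮 ω} * μ.real {ω | t' ∈ 𝒮 ω}) * (f t * f t') := by
  classical
  have sum_eq_sum_indicator : (fun ω => ∑ t ∈ 𝒮 ω, f t) =
      ∑ t, {ω | t ∈ 𝒮 ω}.indicator fun _ => f t := by
    ext ω
    simp [Set.indicator_apply]
  rw [sum_eq_sum_indicator, variance_sum fun t => (memLp_const (f t)).indicator (h𝒮 t)]
  simp only [covariance_indicator_const (h𝒮 _) (h𝒮 _), Set.ofPred_and]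

end RandomSubset

/-- The variance of the GUS estimator `X = (1/a) ∑_{t ∈ 𝒮} f t` is
`∑_{S ⊆ ι} (c_S / a²) y_S − y_∅`, where `y_S` groups the data by the coordinates in `S`
and `c_S = ∑_{T ⊆ S} (−1)^{|S|−|T|} b T`. -/
theorem gus_variance
    {ι : Type*} [Fintype ι] [DecidableEq ι]
    {R : ι → Type*} [∀ i, Fintype (R i)] [∀ i, Nonempty (R i)] [∀ i, DecidableEq (R i)]
    {Ω : Type*} [MeasurableSpace Ω] (μ : Measure Ω) [IsProbabilityMeasure μ]
    (𝒮 : Ω → Finset (∀ i, R i)) (hmeas : ∀ t, MeasurableSet {ω | t ∈ 𝒮 ω})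
    (a : ℝ) (ha : 0 < a) (b : Finset ι → ℝ)
    (hA : ∀ t, (μ {ω | t ∈ 𝒮 ω}).toReal = a)
    (hB : ∀ t t', (μ {ω | t ∈ 𝒮 ω ∧ t' ∈ 𝒮 ω}).toReal =
      b (Finset.univ.filter fun i => t i = t' i))
    (f : (∀ i, R i) → ℝ) :
    variance (fun ω => (1 / a) * ∑ t ∈ 𝒮 ω, f t) μ =
      (∑ S : Finset ι,
        ((∑ T ∈ S.powerset, (-1 : ℝ) ^ (S.card - T.card) * b T) / a ^ 2) *
          (∑ u : ∀ i : {x // x ∈ S}, R i.1,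
            (∑ v : ∀ i : {x // x ∈ Sᶜ}, R i.1, f (mergeTuple S u v)) ^ 2))
      - (∑ u : ∀ i : {x // x ∈ (∅ : Finset ι)}, R i.1,
          (∑ v : ∀ i : {x // x ∈ (∅ : Finset ι)ᶜ}, R i.1, f (mergeTuple ∅ u v)) ^ 2) := by
  change _ = (∑ S, subsetMoebius b S / a ^ 2 * groupedSquareSum f S) - groupedSquareSum f ∅
  have pair_prob (t t') : μ.real {ω | t ∈ 𝒮 ω ∧ t' ∈ 𝒮 ω} = b (agreementSet t t') := hB t t'
  have single_prob (t) : μ.real {ω | t ∈ 𝒮 ω} = a := hA t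
  have variance_sample_sum : Var[fun ω => ∑ t ∈ 𝒮 ω, f t; μ] =
      ∑ S, subsetMoebius b S * groupedSquareSum f S - a ^ 2 * groupedSquareSum f ∅ := by
    rw [variance_sum_mem hmeas, sum_subsetMoebius_mul_groupedSquareSum, groupedSquareSum_empty]
    simp only [pair_prob, single_prob, sub_mul, sum_sub_distrib, mul_sum, sq]
  rw [variance_const_mul, variance_sample_sum, mul_sub, mul_sum]
  congr 1
  · exact sum_congr rfl fun S _ => by ring
  · field_simp
end

section
/- Let 𝒮 be a random subset of a finite type R on a probability space (Ω₁, ℙ₁) and let 𝒯 be a random subset of R on a probability space (Ω₂, ℙ₂). Then the following are equivalent: (i) for every f : R → ℝ, E[A_f(𝒮)] = E[A_f(𝒯)] and Var[A_f(𝒮)] = Var[A_f(𝒯)]; (ii) ℙ₁[t ∈ 𝒮] = ℙ₂[t ∈ 𝒯] for every t ∈ R, and ℙ₁[t ∈ 𝒮 and t' ∈ 𝒮] = ℙ₂[t ∈ 𝒯 and t' ∈ 𝒯] for all t, t' ∈ R. -/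
open MeasureTheory ProbabilityTheory Finset

/-!
Write `A_f(𝒮) = ∑ t, f t * 1_{t ∈ 𝒮}`, a linear combination of the inclusion indicators. Its mean is
a linear form in `f` whose coefficients are the means of the indicators, and its variance is a
quadratic form in `f` whose matrix is their covariance matrix; by polarization, knowing both forms
amounts to knowing these means and covariances. Since the product of two indicators is the indicator
of the intersection, means and covariances of the inclusion indicators carry the same information as
the first- and second-order inclusion probabilities.
-/

section LinearCombinations

variable {ι Ω Ω' : Type*} [Fintype ι] {mΩ : MeasurableSpace Ω} {mΩ' : MeasurableSpace Ω'}
  {μ : Measure Ω} {ν : Measure Ω'} {X : ι → Ω → ℝ} {Y : ι → Ω' → ℝ}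

lemma integral_sum_mul (hX : ∀ i, Integrable (X i) μ) (f : ι → ℝ) :
    ∫ ω, ∑ i, f i * X i ω ∂μ = ∑ i, f i * ∫ ω, X i ω ∂μ := by
  rw [integral_finsetSum _ fun i _ ↦ (hX i).const_mul (f i)]
  simp only [integral_const_mul]

lemma variance_sum_mul [IsFiniteMeasure μ] (hX : ∀ i, MemLp (X i) 2 μ) (f : ι → ℝ) :
    Var[fun ω ↦ ∑ i, f i * X i ω; μ] = ∑ i, ∑ j, f i * f j * cov[X i, X j; μ] := by
  rw [variance_fun_sum fun i ↦ (hX i).const_mul (f i)]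
  simp only [covariance_const_mul_left, covariance_const_mul_right, mul_assoc, mul_left_comm]

theorem forall_integral_sum_mul_eq_iff
    (hX : ∀ i, Integrable (X i) μ) (hY : ∀ i, Integrable (Y i) ν) :
    (∀ f : ι → ℝ, ∫ ω, ∑ i, f i * X i ω ∂μ = ∫ ω, ∑ i, f i * Y i ω ∂ν) ↔
      ∀ i, ∫ ω, X i ω ∂μ = ∫ ω, Y i ω ∂ν := by
  classical
  refine ⟨fun h i ↦ ?_, fun h f ↦ ?_⟩
  · simpa [Pi.single_apply] using h (Pi.single i 1)
  · simp only [integral_sum_mul hX, integral_sum_mul hY, h]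

theorem forall_variance_sum_mul_eq_iff [IsFiniteMeasure μ] [IsFiniteMeasure ν]
    (hX : ∀ i, MemLp (X i) 2 μ) (hY : ∀ i, MemLp (Y i) 2 ν) :
    (∀ f : ι → ℝ, Var[fun ω ↦ ∑ i, f i * X i ω; μ] = Var[fun ω ↦ ∑ i, f i * Y i ω; ν]) ↔
      ∀ i j, cov[X i, X j; μ] = cov[Y i, Y j; ν] := by
  classical
  refine ⟨fun h i j ↦ ?_, fun h f ↦ ?_⟩
  · have variance_eq (k : ι) : Var[X k; μ] = Var[Y k; ν] := by
      simpa [Pi.single_apply] using h (Pi.single k 1)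
    have variance_add_eq : Var[fun ω ↦ X i ω + X j ω; μ] = Var[fun ω ↦ Y i ω + Y j ω; ν] := by
      have variance_single_add_single_eq := h (Pi.single i 1 + Pi.single j 1)
      simpa only [Pi.add_apply, Pi.single_apply, add_mul, ite_mul, one_mul, zero_mul,
        sum_add_distrib, sum_ite_eq', mem_univ, if_true] using variance_single_add_single_eq
    rw [variance_fun_add (hX i) (hX j), variance_fun_add (hY i) (hY j)] at variance_add_eq
    linarith [variance_eq i, variance_eq j]
  · simp only [variance_sum_mul hX, variance_sum_mul hY, h]

end LinearCombinations

section Indicators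

variable {Ω : Type*} {mΩ : MeasurableSpace Ω} {μ : Measure Ω} {A B : Set Ω}

lemma memLp_indicator_one [IsFiniteMeasure μ] (p : ENNReal) (hA : MeasurableSet A) :
    MemLp (A.indicator (1 : Ω → ℝ)) p μ :=
  memLp_indicator_const p hA 1 (.inr (measure_ne_top μ A))

lemma covariance_indicator_one [IsProbabilityMeasure μ]
    (hA : MeasurableSet A) (hB : MeasurableSet B) :
    cov[A.indicator 1, B.indicator 1; μ] = μ.real (A ∩ B) - μ.real A * μ.real B := by
  rw [covariance_eq_sub (memLp_indicator_one 2 hA) (memLp_indicator_one 2 hB),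
    ← Set.inter_indicator_one, integral_indicator_one (hA.inter hB), integral_indicator_one hA,
    integral_indicator_one hB]

lemma sum_eq_sum_mul_indicator_mem {R M : Type*} [Fintype R] [NonAssocSemiring M]
    (S : Ω → Finset R) (f : R → M) (ω : Ω) :
    ∑ t ∈ S ω, f t = ∑ t, f t * {ω | t ∈ S ω}.indicator 1 ω := by
  classical
  simp [Set.indicator_apply]

end Indicators

/-- SOA-equivalence of two random subsets (agreement of expectation and
variance of every SUM-aggregate) is equivalent to agreement of all first- and
second-order inclusion probabilities. -/
theorem soa_equiv_iff_inclusion_probs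
    {R : Type*} [Fintype R] {Ω₁ Ω₂ : Type*} [MeasurableSpace Ω₁] [MeasurableSpace Ω₂]
    (μ₁ : Measure Ω₁) [IsProbabilityMeasure μ₁]
    (μ₂ : Measure Ω₂) [IsProbabilityMeasure μ₂]
    (𝒮 : Ω₁ → Finset R) (𝒯 : Ω₂ → Finset R)
    (h𝒮 : ∀ t : R, MeasurableSet {ω | t ∈ 𝒮 ω})
    (h𝒯 : ∀ t : R, MeasurableSet {ω | t ∈ 𝒯 ω}) :
    (∀ f : R → ℝ,
        (∫ ω, (∑ t ∈ 𝒮 ω, f t) ∂μ₁ = ∫ ω, (∑ t ∈ 𝒯 ω, f t) ∂μ₂) ∧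
        variance (fun ω => ∑ t ∈ 𝒮 ω, f t) μ₁ = variance (fun ω => ∑ t ∈ 𝒯 ω, f t) μ₂)
    ↔
    ((∀ t : R, μ₁ {ω | t ∈ 𝒮 ω} = μ₂ {ω | t ∈ 𝒯 ω}) ∧
      (∀ t t' : R, μ₁ {ω | t ∈ 𝒮 ω ∧ t' ∈ 𝒮 ω} = μ₂ {ω | t ∈ 𝒯 ω ∧ t' ∈ 𝒯 ω})) := by
  have memLp𝒮 (t : R) : MemLp ({ω | t ∈ 𝒮 ω}.indicator (1 : Ω₁ → ℝ)) 2 μ₁ :=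
    memLp_indicator_one 2 (h𝒮 t)
  have memLp𝒯 (t : R) : MemLp ({ω | t ∈ 𝒯 ω}.indicator (1 : Ω₂ → ℝ)) 2 μ₂ :=
    memLp_indicator_one 2 (h𝒯 t)
  simp only [sum_eq_sum_mul_indicator_mem 𝒮, sum_eq_sum_mul_indicator_mem 𝒯, forall_and]
  rw [forall_integral_sum_mul_eq_iff (fun t ↦ (memLp𝒮 t).integrable one_le_two)
      (fun t ↦ (memLp𝒯 t).integrable one_le_two),
    forall_variance_sum_mul_eq_iff memLp𝒮 memLp𝒯]
  simp only [integral_indicator_one (h𝒮 _), integral_indicator_one (h𝒯 _),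
    covariance_indicator_one (h𝒮 _) (h𝒮 _), covariance_indicator_one (h𝒯 _) (h𝒯 _),
    Set.ofPred_and, ← measureReal_eq_measureReal_iff (measure_ne_top _ _) (measure_ne_top _ _)]
  exact and_congr_right fun h ↦ by simp only [h, sub_left_inj]
end

section
/- Let 𝒮₁ and 𝒮₂ be GUS samples of the same finite product R = Π_{i ∈ ι} R_i with parameters (a₁, b¹) and (a₂, b²), defined on a common probability space and independent of each other. Then the union 𝒮₁ ∪ 𝒮₂ is a GUS sample of R with parameters a = a₁ + a₂ − a₁a₂ and b(T) = 2a − 1 + (1 − 2a₁ + b¹(T)) · (1 − 2a₂ + b²(T)) for every T ⊆ ι. -/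
open MeasureTheory Finset

/-! Inclusion–exclusion turns the inclusion probabilities of a GUS sample into the probabilities
`1 - a` and `1 - 2 * a + b T` of missing one tuple and of missing two tuples with agreement set `T`.
A union misses a set exactly when both of its parts do, so under independence these avoidance
probabilities multiply. -/

section

open ProbabilityTheory

variable {α κ Ω : Type*} [MeasurableSpace Ω]

/-- The avoidance functional (void probability) of a random subset `𝒮` of `α`: the probability that
`𝒮` misses `T`. -/
noncomputable def avoidanceProb (μ : Measure Ω) (𝒮 : Ω → Set α) (T : Set α) : ℝ :=
  μ.real {ω | Disjoint T (𝒮 ω)}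

/-- GUS samples of `α` with parameters `a` and `b`: the joint inclusion probability of two tuples
depends only on `agree t t'`, which for a product relation is the agreement set of `t` and `t'`. -/
structure IsGUS (μ : Measure Ω) (agree : α → α → κ) (𝒮 : Ω → Set α) (a : ℝ) (b : κ → ℝ) :
    Prop where
  measurableSet_mem : ∀ t, MeasurableSet {ω | t ∈ 𝒮 ω}
  measureReal_mem : ∀ t, μ.real {ω | t ∈ 𝒮 ω} = a
  measureReal_mem_and_mem : ∀ t t', μ.real {ω | t ∈ 𝒮 ω ∧ t' ∈ 𝒮 ω} = b (agree t t')

variable {μ : Measure Ω} {agree : α → α → κ} {𝒮 𝒮₁ 𝒮₂ : Ω → Set α} {a a₁ a₂ : ℝ} {b b₁ b₂ : κ → ℝ}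

theorem measurableSet_setOf_disjoint {T : Set α} (hT : T.Countable) :
    MeasurableSet {s : Set α | Disjoint T s} := by
  simp only [Set.disjoint_left, Set.ofPred_forall]
  exact .biInter hT fun t _ => measurableSet_notMem t

theorem avoidanceProb_union (hindep : IndepFun 𝒮₁ 𝒮₂ μ) {T : Set α} (hT : T.Countable) :
    avoidanceProb μ (fun ω => 𝒮₁ ω ∪ 𝒮₂ ω) T = avoidanceProb μ 𝒮₁ T * avoidanceProb μ 𝒮₂ T := by
  have hmeas := measurableSet_setOf_disjoint hT
  simp only [avoidanceProb, Set.disjoint_union_right, measureReal_def, ← ENNReal.toReal_mul]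
  exact congrArg ENNReal.toReal (hindep.measure_inter_preimage_eq_mul _ _ hmeas hmeas)

theorem avoidanceProb_singleton [IsProbabilityMeasure μ] {t : α}
    (ht : MeasurableSet {ω | t ∈ 𝒮 ω}) :
    avoidanceProb μ 𝒮 {t} = 1 - μ.real {ω | t ∈ 𝒮 ω} := by
  simp only [avoidanceProb, Set.disjoint_singleton_left]
  exact probReal_compl_eq_one_sub ht

theorem avoidanceProb_pair [IsProbabilityMeasure μ] {t t' : α}
    (ht : MeasurableSet {ω | t ∈ 𝒮 ω}) (ht' : MeasurableSet {ω | t' ∈ 𝒮 ω}) :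
    avoidanceProb μ 𝒮 {t, t'} =
      1 - μ.real {ω | t ∈ 𝒮 ω} - μ.real {ω | t' ∈ 𝒮 ω} + μ.real {ω | t ∈ 𝒮 ω ∧ t' ∈ 𝒮 ω} := by
  have hcompl : {ω | Disjoint {t, t'} (𝒮 ω)} = ({ω | t ∈ 𝒮 ω} ∪ {ω | t' ∈ 𝒮 ω})ᶜ := by
    ext ω
    simp
  have hincl : μ.real ({ω | t ∈ 𝒮 ω} ∪ {ω | t' ∈ 𝒮 ω}) + μ.real {ω | t ∈ 𝒮 ω ∧ t' ∈ 𝒮 ω} =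
      μ.real {ω | t ∈ 𝒮 ω} + μ.real {ω | t' ∈ 𝒮 ω} :=
    measureReal_union_add_inter ht'
  rw [avoidanceProb, hcompl, probReal_compl_eq_one_sub (ht.union ht')]
  linarith

theorem isGUS_iff_avoidanceProb [IsProbabilityMeasure μ]
    (hmeas : ∀ t, MeasurableSet {ω | t ∈ 𝒮 ω}) :
    IsGUS μ agree 𝒮 a b ↔
      (∀ t, avoidanceProb μ 𝒮 {t} = 1 - a) ∧
        ∀ t t', avoidanceProb μ 𝒮 {t, t'} = 1 - 2 * a + b (agree t t') := by
  simp only [avoidanceProb_singleton (hmeas _), avoidanceProb_pair (hmeas _) (hmeas _)]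
  constructor
  · rintro ⟨-, hone, htwo⟩
    refine ⟨fun t => by rw [hone], fun t t' => ?_⟩
    rw [hone, hone, htwo]
    ring
  · rintro ⟨hone, htwo⟩
    refine ⟨hmeas, fun t => by linarith [hone t], fun t t' => ?_⟩
    linarith [hone t, hone t', htwo t t']

theorem gus_union_general [IsProbabilityMeasure μ] (h₁ : IsGUS μ agree 𝒮₁ a₁ b₁)
    (h₂ : IsGUS μ agree 𝒮₂ a₂ b₂) (hindep : IndepFun 𝒮₁ 𝒮₂ μ) :
    IsGUS μ agree (fun ω => 𝒮₁ ω ∪ 𝒮₂ ω) (a₁ + a₂ - a₁ * a₂) (fun T =>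
      2 * (a₁ + a₂ - a₁ * a₂) - 1 + (1 - 2 * a₁ + b₁ T) * (1 - 2 * a₂ + b₂ T)) := by
  obtain ⟨hone₁, htwo₁⟩ := (isGUS_iff_avoidanceProb h₁.measurableSet_mem).1 h₁
  obtain ⟨hone₂, htwo₂⟩ := (isGUS_iff_avoidanceProb h₂.measurableSet_mem).1 h₂
  have hmeas (t : α) : MeasurableSet {ω | t ∈ 𝒮₁ ω ∪ 𝒮₂ ω} :=
    (h₁.measurableSet_mem t).union (h₂.measurableSet_mem t)
  refine (isGUS_iff_avoidanceProb hmeas).2 ⟨fun t => ?_, fun t t' => ?_⟩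
  · rw [avoidanceProb_union hindep (Set.countable_singleton t), hone₁, hone₂]
    ring
  · rw [avoidanceProb_union hindep (Set.toFinite {t, t'}).countable, htwo₁, htwo₂]
    ring

theorem measurable_coe_finset : Measurable (SetLike.coe : Finset α → Set α) :=
  measurable_finset_iff_measurable_set.1 measurable_id

theorem indepFun_coe_finset_of_measure_inter_preimage {𝒯₁ 𝒯₂ : Ω → Finset α}
    (h : ∀ E F : Set (Finset α), μ (𝒯₁ ⁻¹' E ∩ 𝒯₂ ⁻¹' F) = μ (𝒯₁ ⁻¹' E) * μ (𝒯₂ ⁻¹' F)) :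
    IndepFun (fun ω => (𝒯₁ ω : Set α)) (fun ω => (𝒯₂ ω : Set α)) μ :=
  (indepFun_iff_measure_inter_preimage_eq_mul.2 fun E F _ _ => h E F).comp
    measurable_coe_finset measurable_coe_finset

end

/-- GUS Union. The union of two independent GUS samples of the same product
relation, with parameters `(a₁, b₁)` and `(a₂, b₂)`, is a GUS sample with
`a = a₁ + a₂ − a₁a₂` and `b T = 2a − 1 + (1 − 2a₁ + b₁ T)(1 − 2a₂ + b₂ T)`. -/
theorem gus_union
    {ι : Type*} [Fintype ι] [DecidableEq ι]
    {R : ι → Type*} [∀ i, Fintype (R i)] [∀ i, Nonempty (R i)] [∀ i, DecidableEq (R i)]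
    {Ω : Type*} [MeasurableSpace Ω] (μ : Measure Ω) [IsProbabilityMeasure μ]
    (𝒮₁ 𝒮₂ : Ω → Finset (∀ i, R i))
    (hmeas₁ : ∀ t, MeasurableSet {ω | t ∈ 𝒮₁ ω})
    (hmeas₂ : ∀ t, MeasurableSet {ω | t ∈ 𝒮₂ ω})
    (a₁ a₂ : ℝ) (b₁ b₂ : Finset ι → ℝ)
    (hA₁ : ∀ t, (μ {ω | t ∈ 𝒮₁ ω}).toReal = a₁)
    (hB₁ : ∀ t t', (μ {ω | t ∈ 𝒮₁ ω ∧ t' ∈ 𝒮₁ ω}).toReal =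
      b₁ (Finset.univ.filter fun i => t i = t' i))
    (hA₂ : ∀ t, (μ {ω | t ∈ 𝒮₂ ω}).toReal = a₂)
    (hB₂ : ∀ t t', (μ {ω | t ∈ 𝒮₂ ω ∧ t' ∈ 𝒮₂ ω}).toReal =
      b₂ (Finset.univ.filter fun i => t i = t' i))
    (hindep : ∀ (E F : Set (Finset (∀ i, R i))),
      μ (𝒮₁ ⁻¹' E ∩ 𝒮₂ ⁻¹' F) = μ (𝒮₁ ⁻¹' E) * μ (𝒮₂ ⁻¹' F)) :
    (∀ t, (μ {ω | t ∈ 𝒮₁ ω ∪ 𝒮₂ ω}).toReal = a₁ + a₂ - a₁ * a₂) ∧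
    (∀ t t', (μ {ω | t ∈ 𝒮₁ ω ∪ 𝒮₂ ω ∧ t' ∈ 𝒮₁ ω ∪ 𝒮₂ ω}).toReal =
      2 * (a₁ + a₂ - a₁ * a₂) - 1 +
        (1 - 2 * a₁ + b₁ (Finset.univ.filter fun i => t i = t' i)) *
          (1 - 2 * a₂ + b₂ (Finset.univ.filter fun i => t i = t' i))) := by
  have h := gus_union_general ⟨hmeas₁, hA₁, hB₁⟩ ⟨hmeas₂, hA₂, hB₂⟩
    (indepFun_coe_finset_of_measure_inter_preimage hindep)
  simpa only [← Finset.coe_union, Finset.mem_coe, measureReal_def] using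
    And.intro h.measureReal_mem h.measureReal_mem_and_mem
end

section
/- Let 𝒮₁ and 𝒮₂ be GUS samples of the same finite product R = Π_{i ∈ ι} R_i with parameters (a₁, b¹) and (a₂, b²), defined on a common probability space and independent of each other. Then the intersection 𝒮₁ ∩ 𝒮₂ (the compaction of the two GUS methods, i.e. applying one GUS method to the output of the other) is a GUS sample of R with parameters a = a₁·a₂ and b(T) = b¹(T)·b²(T) for every T ⊆ ι. -/
open MeasureTheory Finset

section

open ProbabilityTheory

variable {Ω : Type*} [MeasurableSpace Ω] {μ : Measure Ω}

theorem measurableSet_setOf_subset {α : Type*} {A : Set α} (hA : A.Countable) :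
    MeasurableSet {s : Set α | A ⊆ s} := by
  simp only [Set.subset_def, Set.ofPred_forall]
  exact .biInter hA fun t _ ↦ measurableSet_mem t

theorem measureReal_subset_inter_of_indepFun {α : Type*} {𝒮₁ 𝒮₂ : Ω → Set α}
    (hindep : IndepFun 𝒮₁ 𝒮₂ μ) {A : Set α} (hA : A.Countable) :
    μ.real {ω | A ⊆ 𝒮₁ ω ∩ 𝒮₂ ω} = μ.real {ω | A ⊆ 𝒮₁ ω} * μ.real {ω | A ⊆ 𝒮₂ ω} := by
  have hsuperset := measurableSet_setOf_subset hA
  simp only [Set.subset_inter_iff, measureReal_def, ← ENNReal.toReal_mul]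
  exact congrArg ENNReal.toReal
    (hindep.measure_inter_preimage_eq_mul _ _ hsuperset hsuperset)

theorem indepFun_coe_finset {α : Type*} {𝒮₁ 𝒮₂ : Ω → Finset α}
    (hindep : ∀ E F : Set (Finset α),
      μ (𝒮₁ ⁻¹' E ∩ 𝒮₂ ⁻¹' F) = μ (𝒮₁ ⁻¹' E) * μ (𝒮₂ ⁻¹' F)) :
    IndepFun (fun ω ↦ (𝒮₁ ω : Set α)) (fun ω ↦ (𝒮₂ ω : Set α)) μ :=
  indepFun_iff_measure_inter_preimage_eq_mul.2 fun E F _ _ ↦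
    hindep {s | (s : Set α) ∈ E} {s | (s : Set α) ∈ F}

variable {ι : Type*} {R : ι → Type*}

/-- A random subset `𝒮` of the product `Π i, R i` is a generalized uniform sampling (GUS) sample
with parameters `(a, b)` if every tuple is sampled with probability `a`, and two tuples are sampled
together with a probability `b T` depending only on the set `T` of coordinates where they agree.
Samples are `Set`-valued and `b` is a function on `Set ι` to cover infinite relations `R i` and
infinite index types; `Set (Π i, R i)` carries the σ-algebra generated by the events `t ∈ s`. -/
structure IsGUSSample (μ : Measure Ω) [IsProbabilityMeasure μ] (𝒮 : Ω → Set (∀ i, R i))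
    (a : ℝ) (b : Set ι → ℝ) : Prop where
  measurable : Measurable 𝒮
  measureReal_mem : ∀ t, μ.real {ω | t ∈ 𝒮 ω} = a
  measureReal_mem_and_mem : ∀ t t', μ.real {ω | t ∈ 𝒮 ω ∧ t' ∈ 𝒮 ω} = b {i | t i = t' i}

variable [IsProbabilityMeasure μ]

theorem isGUSSample_coe_finset_iff [Fintype ι] [∀ i, DecidableEq (R i)]
    {𝒮 : Ω → Finset (∀ i, R i)} {a : ℝ} {b : Finset ι → ℝ} :
    IsGUSSample μ (fun ω ↦ (𝒮 ω : Set (∀ i, R i))) a (fun T ↦ b T.toFinite.toFinset) ↔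
      (∀ t, MeasurableSet {ω | t ∈ 𝒮 ω}) ∧ (∀ t, μ.real {ω | t ∈ 𝒮 ω} = a) ∧
        ∀ t t', μ.real {ω | t ∈ 𝒮 ω ∧ t' ∈ 𝒮 ω} = b {i | t i = t' i} := by
  have measurable_iff : Measurable (fun ω ↦ (𝒮 ω : Set (∀ i, R i))) ↔
      ∀ t, MeasurableSet {ω | t ∈ 𝒮 ω} := by
    simp only [measurable_set_iff, measurableSet_setOfPred, Finset.mem_coe]
  have agreement_eq (t t' : ∀ i, R i) :
      (Set.toFinite {i | t i = t' i}).toFinset = ({i | t i = t' i} : Finset ι) :=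
    Set.Finite.toFinset_ofPred _ _
  simp only [← measurable_iff, ← agreement_eq]
  exact ⟨fun ⟨hmeas, hmem, hpair⟩ ↦ ⟨hmeas, hmem, hpair⟩,
    fun ⟨hmeas, hmem, hpair⟩ ↦ ⟨hmeas, hmem, hpair⟩⟩

theorem gus_compaction_general {𝒮₁ 𝒮₂ : Ω → Set (∀ i, R i)} {a₁ a₂ : ℝ} {b₁ b₂ : Set ι → ℝ}
    (h₁ : IsGUSSample μ 𝒮₁ a₁ b₁) (h₂ : IsGUSSample μ 𝒮₂ a₂ b₂) (hindep : IndepFun 𝒮₁ 𝒮₂ μ) :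
    IsGUSSample μ (fun ω ↦ 𝒮₁ ω ∩ 𝒮₂ ω) (a₁ * a₂) (fun T ↦ b₁ T * b₂ T) where
  measurable := measurable_set_iff.2 fun t ↦
    (measurable_set_iff.1 h₁.measurable t).and (measurable_set_iff.1 h₂.measurable t)
  measureReal_mem t := by
    rw [← h₁.measureReal_mem t, ← h₂.measureReal_mem t]
    simpa only [Set.singleton_subset_iff] using
      measureReal_subset_inter_of_indepFun hindep (Set.countable_singleton t)
  measureReal_mem_and_mem t t' := by
    rw [← h₁.measureReal_mem_and_mem t t', ← h₂.measureReal_mem_and_mem t t']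
    simpa only [Set.pair_subset_iff] using
      measureReal_subset_inter_of_indepFun hindep (Set.toFinite {t, t'}).countable

end

/-- GUS Compaction. The intersection of two independent GUS samples of the
same product relation, with parameters `(a₁, b₁)` and `(a₂, b₂)`, is a GUS sample with
`a = a₁·a₂` and `b T = b₁ T · b₂ T`. -/
theorem gus_compaction
    {ι : Type*} [Fintype ι] [DecidableEq ι]
    {R : ι → Type*} [∀ i, Fintype (R i)] [∀ i, Nonempty (R i)] [∀ i, DecidableEq (R i)]
    {Ω : Type*} [MeasurableSpace Ω] (μ : Measure Ω) [IsProbabilityMeasure μ]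
    (𝒮₁ 𝒮₂ : Ω → Finset (∀ i, R i))
    (hmeas₁ : ∀ t, MeasurableSet {ω | t ∈ 𝒮₁ ω})
    (hmeas₂ : ∀ t, MeasurableSet {ω | t ∈ 𝒮₂ ω})
    (a₁ a₂ : ℝ) (b₁ b₂ : Finset ι → ℝ)
    (hA₁ : ∀ t, (μ {ω | t ∈ 𝒮₁ ω}).toReal = a₁)
    (hB₁ : ∀ t t', (μ {ω | t ∈ 𝒮₁ ω ∧ t' ∈ 𝒮₁ ω}).toReal =
      b₁ (Finset.univ.filter fun i => t i = t' i))
    (hA₂ : ∀ t, (μ {ω | t ∈ 𝒮₂ ω}).toReal = a₂)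
    (hB₂ : ∀ t t', (μ {ω | t ∈ 𝒮₂ ω ∧ t' ∈ 𝒮₂ ω}).toReal =
      b₂ (Finset.univ.filter fun i => t i = t' i))
    (hindep : ∀ (E F : Set (Finset (∀ i, R i))),
      μ (𝒮₁ ⁻¹' E ∩ 𝒮₂ ⁻¹' F) = μ (𝒮₁ ⁻¹' E) * μ (𝒮₂ ⁻¹' F)) :
    (∀ t, (μ {ω | t ∈ 𝒮₁ ω ∩ 𝒮₂ ω}).toReal = a₁ * a₂) ∧
    (∀ t t', (μ {ω | t ∈ 𝒮₁ ω ∩ 𝒮₂ ω ∧ t' ∈ 𝒮₁ ω ∩ 𝒮₂ ω}).toReal =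
      b₁ (Finset.univ.filter fun i => t i = t' i) *
        b₂ (Finset.univ.filter fun i => t i = t' i)) := by
  have hinter := gus_compaction_general (isGUSSample_coe_finset_iff.2 ⟨hmeas₁, hA₁, hB₁⟩)
    (isGUSSample_coe_finset_iff.2 ⟨hmeas₂, hA₂, hB₂⟩) (indepFun_coe_finset hindep)
  simp only [← Finset.coe_inter] at hinter
  exact (isGUSSample_coe_finset_iff (b := fun T ↦ b₁ T * b₂ T).1 hinter).2
end

section
/- Let ι₁, ι₂ be disjoint finite index types (formally, work with the sum type ι₁ ⊕ ι₂), let R₁ = Π_{i ∈ ι₁} A_i and R₂ = Π_{j ∈ ι₂} B_j be finite products of finite nonempty types, and let 𝒮₁ and 𝒮₂ be GUS samples of R₁ and R₂ with parameters (a₁, b¹) and (a₂, b²), defined on a common probability space and independent of each other. Then the composition, i.e. the random subset 𝒮 = {t ∈ R₁ × R₂ : π₁(t) ∈ 𝒮₁ and π₂(t) ∈ 𝒮₂}, is a GUS sample of R₁ × R₂ (with lineage indexed by ι₁ ⊕ ι₂) with parameters a = a₁·a₂ and b(T) = b¹(T ∩ ι₁) · b²(T ∩ ι₂) for every T ⊆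 ι₁ ⊕ ι₂. -/
open MeasureTheory Finset

/-- A GUS (generalized uniform sampling) sample `𝒮` of the relation `R`, with parameters `a` and
`b`. The finset `agree t t'` is the set of lineage indices on which `t` and `t'` coincide; it is an
argument because the rows of a composition are pairs of tuples, not functions on `ι₁ ⊕ ι₂`. Samples
are sets rather than finsets because on an infinite relation an almost surely finite GUS sample has
`a = 0`. -/
structure IsGUS_s11 {Ω R ι : Type*} [MeasurableSpace Ω] (μ : Measure Ω) [IsProbabilityMeasure μ]
    (𝒮 : Ω → Set R) (agree : R → R → Finset ι) (a : ℝ) (b : Finset ι → ℝ) : Prop where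
  measurableSet_mem : ∀ t, MeasurableSet {ω | t ∈ 𝒮 ω}
  measureReal_mem : ∀ t, μ.real {ω | t ∈ 𝒮 ω} = a
  measureReal_mem_and_mem : ∀ t t', μ.real {ω | t ∈ 𝒮 ω ∧ t' ∈ 𝒮 ω} = b (agree t t')

theorem map_inl_union_map_inr_eq_disjSum {α β : Type*} [DecidableEq α] [DecidableEq β]
    (s : Finset α) (t : Finset β) :
    s.map Function.Embedding.inl ∪ t.map Function.Embedding.inr = s.disjSum t := by
  rw [← map_inl_disjUnion_map_inr, disjUnion_eq_union]

section

open ProbabilityTheory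

variable {Ω : Type*} [MeasurableSpace Ω] {μ : Measure Ω}

theorem measureReal_inter_preimage_eq_mul_of_indepFun {α β : Type*} [MeasurableSpace α]
    [MeasurableSpace β] {f : Ω → α} {g : Ω → β} (h : IndepFun f g μ) {s : Set α} {t : Set β}
    (hs : MeasurableSet s) (ht : MeasurableSet t) :
    μ.real (f ⁻¹' s ∩ g ⁻¹' t) = μ.real (f ⁻¹' s) * μ.real (g ⁻¹' t) := by
  simp only [measureReal_def, h.measure_inter_preimage_eq_mul s t hs ht, ENNReal.toReal_mul]

theorem measurableSet_mem_and_mem {α : Type*} (x y : α) :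
    MeasurableSet {s : Set α | x ∈ s ∧ y ∈ s} :=
  (measurableSet_mem x).inter (measurableSet_mem y)

theorem gus_composition_general [IsProbabilityMeasure μ] {R₁ R₂ ι₁ ι₂ : Type*}
    {𝒮₁ : Ω → Set R₁} {𝒮₂ : Ω → Set R₂} {agree₁ : R₁ → R₁ → Finset ι₁}
    {agree₂ : R₂ → R₂ → Finset ι₂} {a₁ a₂ : ℝ} {b₁ : Finset ι₁ → ℝ} {b₂ : Finset ι₂ → ℝ}
    (h₁ : IsGUS_s11 μ 𝒮₁ agree₁ a₁ b₁) (h₂ : IsGUS_s11 μ 𝒮₂ agree₂ a₂ b₂) (hindep : IndepFun 𝒮₁ 𝒮₂ μ) :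
    IsGUS_s11 μ (fun ω => 𝒮₁ ω ×ˢ 𝒮₂ ω)
      (fun t t' => (agree₁ t.1 t'.1).disjSum (agree₂ t.2 t'.2))
      (a₁ * a₂) (fun T => b₁ T.toLeft * b₂ T.toRight) where
  measurableSet_mem t := (h₁.measurableSet_mem t.1).inter (h₂.measurableSet_mem t.2)
  measureReal_mem t := by
    rw [← h₁.measureReal_mem t.1, ← h₂.measureReal_mem t.2]
    exact measureReal_inter_preimage_eq_mul_of_indepFun hindep
      (measurableSet_mem t.1) (measurableSet_mem t.2)
  measureReal_mem_and_mem t t' :=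
    calc μ.real {ω | t ∈ 𝒮₁ ω ×ˢ 𝒮₂ ω ∧ t' ∈ 𝒮₁ ω ×ˢ 𝒮₂ ω}
        = μ.real (𝒮₁ ⁻¹' {s | t.1 ∈ s ∧ t'.1 ∈ s} ∩ 𝒮₂ ⁻¹' {s | t.2 ∈ s ∧ t'.2 ∈ s}) :=
          congrArg μ.real (Set.ext fun _ => and_and_and_comm)
      _ = μ.real {ω | t.1 ∈ 𝒮₁ ω ∧ t'.1 ∈ 𝒮₁ ω} * μ.real {ω | t.2 ∈ 𝒮₂ ω ∧ t'.2 ∈ 𝒮₂ ω} :=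
          measureReal_inter_preimage_eq_mul_of_indepFun hindep
            (measurableSet_mem_and_mem t.1 t'.1) (measurableSet_mem_and_mem t.2 t'.2)
      _ = b₁ (agree₁ t.1 t'.1) * b₂ (agree₂ t.2 t'.2) := by
          rw [h₁.measureReal_mem_and_mem, h₂.measureReal_mem_and_mem]
      _ = _ := by rw [toLeft_disjSum, toRight_disjSum]

end

/-- GUS Composition. If `𝒮₁`, `𝒮₂` are independent GUS samples of
`R₁ = Π_{i ∈ ι₁} A i` and `R₂ = Π_{j ∈ ι₂} B j` with parameters `(a₁, b₁)`, `(a₂, b₂)`,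
then `𝒮 = {t ∈ R₁ × R₂ : t.1 ∈ 𝒮₁ ∧ t.2 ∈ 𝒮₂}` is a GUS sample of `R₁ × R₂`, with
lineage indexed by `ι₁ ⊕ ι₂`, with parameters `a = a₁·a₂` and
`b T = b₁ (T ∩ ι₁) · b₂ (T ∩ ι₂)`; the agreement set of two pairs is the union inside
`ι₁ ⊕ ι₂` of the agreement sets of the components. -/
theorem gus_composition
    {ι₁ ι₂ : Type*} [Fintype ι₁] [Fintype ι₂] [DecidableEq ι₁] [DecidableEq ι₂]
    {A : ι₁ → Type*} [∀ i, Fintype (A i)] [∀ i, Nonempty (A i)] [∀ i, DecidableEq (A i)]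
    {B : ι₂ → Type*} [∀ j, Fintype (B j)] [∀ j, Nonempty (B j)] [∀ j, DecidableEq (B j)]
    {Ω : Type*} [MeasurableSpace Ω] (μ : Measure Ω) [IsProbabilityMeasure μ]
    (𝒮₁ : Ω → Finset (∀ i, A i)) (𝒮₂ : Ω → Finset (∀ j, B j))
    (hmeas₁ : ∀ t, MeasurableSet {ω | t ∈ 𝒮₁ ω})
    (hmeas₂ : ∀ u, MeasurableSet {ω | u ∈ 𝒮₂ ω})
    (a₁ a₂ : ℝ) (b₁ : Finset ι₁ → ℝ) (b₂ : Finset ι₂ → ℝ)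
    (hA₁ : ∀ t, (μ {ω | t ∈ 𝒮₁ ω}).toReal = a₁)
    (hB₁ : ∀ t t', (μ {ω | t ∈ 𝒮₁ ω ∧ t' ∈ 𝒮₁ ω}).toReal =
      b₁ (Finset.univ.filter fun i => t i = t' i))
    (hA₂ : ∀ u, (μ {ω | u ∈ 𝒮₂ ω}).toReal = a₂)
    (hB₂ : ∀ u u', (μ {ω | u ∈ 𝒮₂ ω ∧ u' ∈ 𝒮₂ ω}).toReal =
      b₂ (Finset.univ.filter fun j => u j = u' j))
    (hindep : ∀ (E : Set (Finset (∀ i, A i))) (F : Set (Finset (∀ j, B j))),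
      μ (𝒮₁ ⁻¹' E ∩ 𝒮₂ ⁻¹' F) = μ (𝒮₁ ⁻¹' E) * μ (𝒮₂ ⁻¹' F))
    -- the combined pairwise-inclusion parameter `b` on lineage `ι₁ ⊕ ι₂`
    (b : Finset (ι₁ ⊕ ι₂) → ℝ)
    (hb : ∀ T : Finset (ι₁ ⊕ ι₂),
      b T = b₁ (T.preimage Sum.inl Sum.inl_injective.injOn) *
        b₂ (T.preimage Sum.inr Sum.inr_injective.injOn))
    -- the agreement set of two pairs, inside `ι₁ ⊕ ι₂`
    (agree : ((∀ i, A i) × (∀ j, B j)) → ((∀ i, A i) × (∀ j, B j)) → Finset (ι₁ ⊕ ι₂))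
    (hagree : ∀ t t', agree t t' =
      (Finset.univ.filter fun i => t.1 i = t'.1 i).map Function.Embedding.inl ∪
        (Finset.univ.filter fun j => t.2 j = t'.2 j).map Function.Embedding.inr) :
    (∀ t : (∀ i, A i) × (∀ j, B j),
      (μ {ω | t.1 ∈ 𝒮₁ ω ∧ t.2 ∈ 𝒮₂ ω}).toReal = a₁ * a₂) ∧
    (∀ t t' : (∀ i, A i) × (∀ j, B j),
      (μ {ω | (t.1 ∈ 𝒮₁ ω ∧ t.2 ∈ 𝒮₂ ω) ∧ (t'.1 ∈ 𝒮₁ ω ∧ t'.2 ∈ 𝒮₂ ω)}).toReal =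
        b (agree t t')) := by
  have hindep_coe : ProbabilityTheory.IndepFun
      (fun ω => (𝒮₁ ω : Set (∀ i, A i))) (fun ω => (𝒮₂ ω : Set (∀ j, B j))) μ :=
    ProbabilityTheory.indepFun_iff_measure_inter_preimage_eq_mul.2
      fun E F _ _ => hindep (SetLike.coe ⁻¹' E) (SetLike.coe ⁻¹' F)
  have h := gus_composition_general ⟨hmeas₁, hA₁, hB₁⟩ ⟨hmeas₂, hA₂, hB₂⟩ hindep_coe
  simp only [hb, hagree, preimage_inl, preimage_inr, map_inl_union_map_inr_eq_disjSum]
  exact ⟨h.measureReal_mem, h.measureReal_mem_and_mem⟩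
end
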